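/- For all integers n ≥ 2 and 1 ≤ m ≤ ⌊n/2⌋, the coproduct coefficient of the Φ⁴ model satisfies S(z_4^n) · coeff_{z_4^n}( π_{2,4}( Σ_{k_1,…,k_m ∈ ℕ} (∏_{i=1}^m D^{k_i}(z_3²)) · ((∏_{i=1}^m ∂_{z_{k_i}})(z_2^m z_4^{n−2m})) ) ) / ( S_forest(m copies of z_3²) · S(z_2^m z_4^{n−2m}) ) = 2^{3m} · n! / (m! · (n−2m)!); equivalently, the reduced extraction–contraction coproduct of multi-indices for the Φ⁴ rule satisfies Δ_M z_4^n = Σ_{m=1}^{⌊n/2⌋} (2^{3m} n!/(m!(n−2m)!)) · (z_3²)^{⊙m} ⊗ z_2^m z_4^{n−2m}. -/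

import Mathlib

/-- The derivation `D = Σ_k z_{k+1} ∂_{z_k}` on `R = ℚ[z_0, z_1, …]`, determined by
`D z_k = z_{k+1}`. -/
noncomputable def Dz : Derivation ℚ (MvPolynomial ℕ ℚ) (MvPolynomial ℕ ℚ) :=
  MvPolynomial.mkDerivation ℚ (fun k => MvPolynomial.X (k + 1))

/-- The symmetry factor `S(β) = ∏_k β(k)! · (k!)^{β(k)}` of a multi-index `β`. -/
def S (β : ℕ →₀ ℕ) : ℕ :=
  ∏ k ∈ β.support, Nat.factorial (β k) * Nat.factorial k ^ β k

/-- Iterated partial derivatives `(∏_i ∂_{z_{k_i}}) P`. -/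
noncomputable def pders (ks : List ℕ) (P : MvPolynomial ℕ ℚ) : MvPolynomial ℕ ℚ :=
  ks.foldr (fun j Q => MvPolynomial.pderiv j Q) P

/-- The projection `π_{2,4}` keeping exactly the monomials `z^γ` with `γ` supported in
`{2, 4}` (the rule of the `Φ⁴` model). -/
noncomputable def proj24 (P : MvPolynomial ℕ ℚ) : MvPolynomial ℕ ℚ :=
  ∑ γ ∈ P.support,
    if γ.support ⊆ ({2, 4} : Finset ℕ) then MvPolynomial.monomial γ (MvPolynomial.coeff γ P)
    else 0

/-! For one variable `z_c`, reading off the coefficients of the powers of `z_c` amounts to the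
ring homomorphism killing all other variables. It is multiplicative, so each factor
`D^{k_i}(z_a²)` of the insertion can be treated separately: by the Leibniz rule `D^k(z_a²)` is a
combination of the `z_{a+i} z_{a+k-i}`, and only `i = k - i = c - a` survives, with coefficient
the central binomial coefficient of `c - a`. Hence a single term of the sum over `(k_1, …, k_m)`
contributes, the one with all `k_i = 2(c - a)`, and its derivatives turn `z_{2(c-a)}^m` into `m!`.
For `a = 3`, `c = 4` this gives `2^m m!`; the symmetry factors supply the remaining `4^m`. -/

section AxisProjection

open MvPolynomial

variable {σ R : Type*} [CommSemiring R] [DecidableEq σ]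

/-- The restriction of a polynomial to the coordinate axis of `a`: the algebra homomorphism sending
`X a` to the variable of `R[X]` and every other variable to zero. -/
noncomputable def axisProj (a : σ) : MvPolynomial σ R →ₐ[R] Polynomial R :=
  aeval (Pi.single a Polynomial.X)

lemma axisProj_X (a i : σ) :
    axisProj a (X i : MvPolynomial σ R) = if i = a then Polynomial.X else 0 := by
  rw [axisProj, aeval_X, Pi.single_apply]

lemma axisProj_monomial (a : σ) (s : σ →₀ ℕ) (r : R) :
    axisProj a (monomial s r) =
      if s = Finsupp.single a (s a) then Polynomial.monomial (s a) r else 0 := by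
  rw [axisProj, aeval_monomial]
  split_ifs with h
  · rw [h]
    simp [← Polynomial.C_mul_X_pow_eq_monomial, Polynomial.algebraMap_eq]
  · obtain ⟨i, hi, hia⟩ : ∃ i ∈ s.support, i ≠ a := by
      simpa only [← Finsupp.support_subset_singleton, Finset.subset_singleton_iff', not_forall,
        exists_prop] using h
    rw [Finsupp.prod, Finset.prod_eq_zero hi, mul_zero]
    rw [Pi.single_eq_of_ne hia, zero_pow (Finsupp.mem_support_iff.mp hi)]

lemma coeff_axisProj (a : σ) (n : ℕ) (P : MvPolynomial σ R) :
    (axisProj a P).coeff n = coeff (Finsupp.single a n) P := by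
  induction P using induction_on' with
  | add p q hp hq => rw [map_add, Polynomial.coeff_add, hp, hq, coeff_add]
  | monomial s r =>
    rw [axisProj_monomial, coeff_monomial]
    by_cases hs : s = Finsupp.single a n
    · simp [hs]
    · rw [if_neg hs]
      split_ifs with h
      · refine Polynomial.coeff_monomial_of_ne _ ?_
        rintro rfl
        exact hs h
      · exact Polynomial.coeff_zero n

end AxisProjection

lemma S_single (k e : ℕ) : S (Finsupp.single k e) = e.factorial * k.factorial ^ e :=
  Finsupp.prod_single_index (h := fun k e : ℕ => e.factorial * k.factorial ^ e) (by simp)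

lemma S_add_of_disjoint {β γ : ℕ →₀ ℕ} (h : Disjoint β.support γ.support) :
    S (β + γ) = S β * S γ :=
  Finsupp.prod_add_index_of_disjoint h fun k e => e.factorial * k.factorial ^ e

lemma S_single_four_div (m r : ℕ) :
    (S (Finsupp.single 4 (2 * m + r)) : ℚ) /
        (S (Finsupp.single 3 2) ^ m * S (Finsupp.single 2 m + Finsupp.single 4 r)) =
      4 ^ m * (2 * m + r).factorial / (m.factorial * r.factorial) := by
  have hdisj : Disjoint (Finsupp.single 2 m).support (Finsupp.single 4 r).support :=
    (Finset.disjoint_singleton.mpr (by decide)).mono Finsupp.support_single_subset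
      Finsupp.support_single_subset
  have hpow : (24 : ℚ) ^ (2 * m + r) = 4 ^ m * (72 ^ m * 2 ^ m * 24 ^ r) := by
    rw [pow_add, pow_mul, ← mul_assoc, ← mul_pow, ← mul_pow]
    norm_num
  rw [S_add_of_disjoint hdisj]
  simp only [S_single, Nat.factorial_two, show Nat.factorial 3 = 6 from rfl,
    show Nat.factorial 4 = 24 from rfl]
  push_cast
  norm_num only [hpow]
  field_simp

open MvPolynomial in
lemma coeff_proj24 (γ : ℕ →₀ ℕ) (P : MvPolynomial ℕ ℚ) :
    coeff γ (proj24 P) = if γ.support ⊆ {2, 4} then coeff γ P else 0 := by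
  have hterm (δ : ℕ →₀ ℕ) : coeff γ
      (if δ.support ⊆ {2, 4} then monomial δ (coeff δ P) else 0) =
      if δ = γ then if γ.support ⊆ {2, 4} then coeff γ P else 0 else 0 := by
    split_ifs <;> simp_all [coeff_monomial]
  rw [proj24, coeff_sum, Finset.sum_congr rfl fun δ _ => hterm δ, Finset.sum_ite_eq']
  simp +contextual [eq_comm]

section Derivatives

open MvPolynomial

lemma pderiv_pderiv_comm {σ R : Type*} [CommSemiring R] (i j : σ) (P : MvPolynomial σ R) :
    pderiv i (pderiv j P) = pderiv j (pderiv i P) := by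
  classical
  ext s
  obtain rfl | hij := eq_or_ne i j
  · rfl
  · simp [coeff_pderiv, hij, hij.symm, mul_right_comm, add_right_comm]

lemma pders_cons (j : ℕ) (ks : List ℕ) (P : MvPolynomial ℕ ℚ) :
    pders (j :: ks) P = pderiv j (pders ks P) :=
  rfl

lemma pderiv_pders (j : ℕ) (ks : List ℕ) (P : MvPolynomial ℕ ℚ) :
    pderiv j (pders ks P) = pders ks (pderiv j P) := by
  induction ks with
  | nil => rfl
  | cons k ks ih => rw [pders_cons, pderiv_pderiv_comm, ih, pders_cons]

lemma pders_zero (ks : List ℕ) : pders ks 0 = 0 := by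
  induction ks with
  | nil => rfl
  | cons k ks ih => rw [pders_cons, ih, map_zero]

lemma pders_eq_zero_of_mem {j : ℕ} {ks : List ℕ} {P : MvPolynomial ℕ ℚ} (hj : j ∈ ks)
    (hP : pderiv j P = 0) : pders ks P = 0 := by
  induction ks with
  | nil => simp at hj
  | cons k ks ih =>
    rw [pders_cons]
    rcases List.mem_cons.mp hj with rfl | hj
    · rw [pderiv_pders, hP, pders_zero]
    · rw [ih hj, map_zero]

lemma pders_replicate_X_pow_mul {j : ℕ} {Q : MvPolynomial ℕ ℚ} (hQ : pderiv j Q = 0) (m l : ℕ) :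
    pders (List.replicate l j) (X j ^ m * Q) = m.descFactorial l • (X j ^ (m - l) * Q) := by
  induction l with
  | zero => simp [pders]
  | succ l ih =>
    rw [List.replicate_succ, pders_cons, ih, map_nsmul, pderiv_mul, pderiv_pow,
      pderiv_X_self, hQ, Nat.descFactorial_succ, Nat.sub_sub]
    simp only [nsmul_eq_mul, Nat.cast_mul]
    ring

lemma iterate_derivation_mul {R A : Type*} [CommSemiring R] [CommSemiring A] [Algebra R A]
    (d : Derivation R A A) (k : ℕ) (x y : A) :
    d^[k] (x * y) =
      ∑ ij ∈ Finset.HasAntidiagonal.antidiagonal k, k.choose ij.1 • (d^[ij.1] x * d^[ij.2] y) := by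
  induction k with
  | zero => simp
  | succ k ih =>
    rw [Finset.sum_antidiagonal_choose_succ_nsmul
      (M := A) (fun i j => d^[i] x * d^[j] y) k, Function.iterate_succ_apply', ih, map_sum,
      ← Finset.sum_add_distrib]
    refine Finset.sum_congr rfl fun ij hij => ?_
    rw [map_nsmul, d.leibniz,
      Nat.choose_symm_of_eq_add (Finset.HasAntidiagonal.mem_antidiagonal.mp hij).symm]
    simp only [smul_eq_mul, smul_add, Function.iterate_succ_apply', mul_comm (d^[ij.2] y)]

lemma Dz_iterate_X (k a : ℕ) : Dz^[k] (X a) = X (a + k) := by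
  induction k with
  | zero => rfl
  | succ k ih => rw [Function.iterate_succ_apply', ih, Dz, mkDerivation_X, add_assoc]

lemma axisProj_Dz_iterate_X_sq (a d k : ℕ) :
    axisProj (a + d) (Dz^[k] (X a ^ 2)) =
      if k = 2 * d then d.centralBinom • Polynomial.X ^ 2 else 0 := by
  have hterm (ij : ℕ × ℕ) :
      axisProj (a + d) (Dz^[ij.1] (X a) * Dz^[ij.2] (X a)) =
        if ij = (d, d) then Polynomial.X ^ 2 else 0 := by
    rw [Dz_iterate_X, Dz_iterate_X, map_mul, axisProj_X, axisProj_X, ite_zero_mul_ite_zero, ← sq]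
    simp only [Nat.add_left_cancel_iff, Prod.ext_iff]
  rw [sq, iterate_derivation_mul, map_sum]
  simp only [map_nsmul, hterm, smul_ite, smul_zero, Finset.sum_ite_eq',
    Finset.HasAntidiagonal.mem_antidiagonal, ← two_mul, eq_comm (a := 2 * d)]
  split_ifs with hk
  · rw [hk, Nat.centralBinom_eq_two_mul_choose]
  · rfl

end Derivatives

section Insertion

open MvPolynomial

/-- The simultaneous insertion `P^{⊙m} ⋆ Q` of `m` copies of `P` into `Q`, before projection to the
rule. The sum has finite support, see `hasFiniteSupport_insertion`. -/
noncomputable def insertion (m : ℕ) (P Q : MvPolynomial ℕ ℚ) : MvPolynomial ℕ ℚ :=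
  ∑ᶠ k : Fin m → ℕ, (∏ i, Dz^[k i] P) * pders (List.ofFn k) Q

lemma hasFiniteSupport_insertion (m : ℕ) (P Q : MvPolynomial ℕ ℚ) :
    (fun k : Fin m → ℕ => (∏ i, Dz^[k i] P) * pders (List.ofFn k) Q).HasFiniteSupport := by
  refine (Finset.finite_toSet (Fintype.piFinset fun _ => Q.vars)).subset fun k hk => ?_
  rw [Finset.mem_coe, Fintype.mem_piFinset]
  intro i
  by_contra hi
  refine hk ?_
  beta_reduce
  rw [pders_eq_zero_of_mem (List.mem_ofFn.mpr ⟨i, rfl⟩) (pderiv_eq_zero_of_notMem_vars hi),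
    mul_zero]

lemma map_insertion_of_forall_ne {A : Type*} [CommSemiring A] [Algebra ℚ A]
    (f : MvPolynomial ℕ ℚ →ₐ[ℚ] A) {P : MvPolynomial ℕ ℚ} {l : ℕ}
    (hP : ∀ k ≠ l, f (Dz^[k] P) = 0) (m : ℕ) (Q : MvPolynomial ℕ ℚ) :
    f (insertion m P Q) = f (Dz^[l] P) ^ m * f (pders (List.replicate m l) Q) := by
  rw [insertion, map_finsum f (hasFiniteSupport_insertion m P Q),
    finsum_eq_single _ (fun _ => l)]
  · simp [List.ofFn_const]
  · intro k hk
    obtain ⟨i, hi⟩ := Function.ne_iff.mp hk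
    rw [map_mul, map_prod, Finset.prod_eq_zero (Finset.mem_univ i) (hP _ hi), zero_mul]

lemma axisProj_insertion_X_sq (a d m : ℕ) {Q : MvPolynomial ℕ ℚ} (hQ : pderiv (2 * d) Q = 0) :
    axisProj (a + d) (insertion m (X a ^ 2) (X (2 * d) ^ m * Q)) =
      (d.centralBinom ^ m * m.factorial) • (Polynomial.X ^ (2 * m) * axisProj (a + d) Q) := by
  rw [map_insertion_of_forall_ne _ fun k hk => by rw [axisProj_Dz_iterate_X_sq, if_neg hk],
    axisProj_Dz_iterate_X_sq, if_pos rfl, pders_replicate_X_pow_mul hQ, Nat.descFactorial_self,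
    Nat.sub_self, pow_zero, one_mul, map_nsmul, smul_pow, smul_mul_smul_comm, ← pow_mul]

lemma coeff_insertion_X_sq {a d : ℕ} (had : a ≠ d) (m r : ℕ) :
    coeff (Finsupp.single (a + d) (2 * m + r))
      (insertion m (X a ^ 2) (X (2 * d) ^ m * X (a + d) ^ r)) =
      d.centralBinom ^ m * m.factorial := by
  have hQ : pderiv (2 * d) (X (a + d) ^ r : MvPolynomial ℕ ℚ) = 0 := by
    rw [pderiv_pow, pderiv_X_of_ne (by lia), mul_zero]
  rw [← coeff_axisProj, axisProj_insertion_X_sq a d m hQ, map_pow, axisProj_X, if_pos rfl,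
    ← pow_add, Polynomial.coeff_smul, Polynomial.coeff_X_pow_self]
  simp

end Insertion

/-- for `n ≥ 2` and `1 ≤ m ≤ ⌊n/2⌋`, the coproduct coefficient of the `Φ⁴`
model satisfies
`S(z_4^n) · coeff_{z_4^n}(π_{2,4}((z_3²)^{⊙m} ⋆ z_2^m z_4^{n−2m}))
  / (S_forest(m copies of z_3²) · S(z_2^m z_4^{n−2m})) = 2^{3m} n! / (m! (n−2m)!)`,
i.e. `Δ_M z_4^n = Σ_{m=1}^{⌊n/2⌋} (2^{3m} n!/(m!(n−2m)!)) (z_3²)^{⊙m} ⊗ z_2^m z_4^{n−2m}`,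
where the simultaneous insertion is
`Σ_{k_1,…,k_m} (∏_i D^{k_i}(z_3²)) · ((∏_i ∂_{z_{k_i}})(z_2^m z_4^{n−2m}))` and the
forest symmetry factor of `m` copies of `z_3²` is `m! · S(z_3²)^m`. -/
theorem stmt_8 (n m : ℕ) (hn : 2 ≤ n) (hm : 1 ≤ m) (hm2 : m ≤ n / 2) :
    (S (Finsupp.single 4 n) : ℚ) *
        MvPolynomial.coeff (Finsupp.single 4 n)
          (proj24 (∑ᶠ k : Fin m → ℕ,
            (∏ i, (⇑Dz)^[k i] ((MvPolynomial.X 3 : MvPolynomial ℕ ℚ) ^ 2)) *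
              pders (List.ofFn k)
                ((MvPolynomial.X 2 : MvPolynomial ℕ ℚ) ^ m *
                  MvPolynomial.X 4 ^ (n - 2 * m)))) /
      ((m.factorial * S (Finsupp.single 3 2) ^ m : ℚ) *
        (S (Finsupp.single 2 m + Finsupp.single 4 (n - 2 * m)) : ℚ))
      = (2 : ℚ) ^ (3 * m) * n.factorial / (m.factorial * (n - 2 * m).factorial) := by
  obtain ⟨r, rfl⟩ : ∃ r, n = 2 * m + r := Nat.exists_eq_add_of_le (by lia)
  have hcoeff := coeff_insertion_X_sq (a := 3) (d := 1) (by decide) m r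
  rw [Nat.add_sub_cancel_left, coeff_proj24,
    if_pos (Finsupp.support_single_subset.trans (by decide)), ← insertion, hcoeff,
    show Nat.centralBinom 1 = 2 from rfl, Nat.cast_ofNat]
  calc (S (Finsupp.single 4 (2 * m + r)) : ℚ) * (2 ^ m * m.factorial) /
        (m.factorial * S (Finsupp.single 3 2) ^ m *
          S (Finsupp.single 2 m + Finsupp.single 4 r))
      = 2 ^ m * (S (Finsupp.single 4 (2 * m + r)) /
          (S (Finsupp.single 3 2) ^ m * S (Finsupp.single 2 m + Finsupp.single 4 r))) := by
        field_simp
    _ = 2 ^ m * (4 ^ m * (2 * m + r).factorial / (m.factorial * r.factorial)) := by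
        rw [S_single_four_div]
    _ = 2 ^ (3 * m) * (2 * m + r).factorial / (m.factorial * r.factorial) := by
        rw [mul_div_assoc, ← mul_assoc, ← mul_pow, pow_mul, mul_div_assoc]
        norm_num
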